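/- Let R be a skew-invertible R-matrix on V⊗V with V = ℂ^N, and assume the operator B := Tr₍₁₎(Ψ) is invertible. Then for every associative unital ℂ-algebra A and every X ∈ Mat_N(A), the partial R-traces of the R-conjugates of X₁ are scalar: Tr₍₂₎(C₂·R₁·X₁·R₁⁻¹) = Tr_R(X)·I_N and Tr₍₂₎(C₂·R₁⁻¹·X₁·R₁) = Tr_R(X)·I_N in Mat_N(A), where X₁ = X⊗I_N ∈ Mat_{N²}(A), C₂ = I_N⊗C, and Tr₍₂₎ denotes the partial trace over the second tensor factor. -/

import Mathlib

open Matrix BigOperators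

/-- `X₁ = X ⊗ id` acting on the factors 1,2 of `(ℂ^N)^{⊗3}`. -/
noncomputable def up12 {N : ℕ} (X : Matrix (Fin N × Fin N) (Fin N × Fin N) ℂ) :
    Matrix (Fin N × Fin N × Fin N) (Fin N × Fin N × Fin N) ℂ :=
  Matrix.of fun p q => X (p.1, p.2.1) (q.1, q.2.1) * (if p.2.2 = q.2.2 then 1 else 0)

/-- `X₂ = id ⊗ X` acting on the factors 2,3 of `(ℂ^N)^{⊗3}`. -/
noncomputable def up23 {N : ℕ} (X : Matrix (Fin N × Fin N) (Fin N × Fin N) ℂ) :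
    Matrix (Fin N × Fin N × Fin N) (Fin N × Fin N × Fin N) ℂ :=
  Matrix.of fun p q => (if p.1 = q.1 then 1 else 0) * X (p.2.1, p.2.2) (q.2.1, q.2.2)

/-- The partial trace over the middle factor of `V^{⊗3}`, landing in `End(V⊗V)`
(factors 1 and 3). -/
noncomputable def ptrMid {N : ℕ}
    (Y : Matrix (Fin N × Fin N × Fin N) (Fin N × Fin N × Fin N) ℂ) :
    Matrix (Fin N × Fin N) (Fin N × Fin N) ℂ :=
  Matrix.of fun a d => ∑ b : Fin N, Y (a.1, b, a.2) (d.1, b, d.2)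

/-- The flip `P₁₃` on factors 1 and 3. -/
noncomputable def flip13 (N : ℕ) : Matrix (Fin N × Fin N) (Fin N × Fin N) ℂ :=
  Matrix.of fun p q => if p.1 = q.2 ∧ p.2 = q.1 then 1 else 0

/-- `B = Tr₍₁₎(Ψ)`. -/
noncomputable def Bmat {N : ℕ} (Ψ : Matrix (Fin N × Fin N) (Fin N × Fin N) ℂ) :
    Matrix (Fin N) (Fin N) ℂ :=
  Matrix.of fun p j => ∑ a : Fin N, Ψ (a, p) (a, j)

/-- `C = Tr₍₂₎(Ψ)`. -/
noncomputable def Cmat {N : ℕ} (Ψ : Matrix (Fin N × Fin N) (Fin N × Fin N) ℂ) :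
    Matrix (Fin N) (Fin N) ℂ :=
  Matrix.of fun i j => ∑ b : Fin N, Ψ (i, b) (j, b)

/-- `X₁ = X ⊗ I_N` for an `A`-valued matrix. -/
def lift1 {N : ℕ} {A : Type} [Ring A] (X : Matrix (Fin N) (Fin N) A) :
    Matrix (Fin N × Fin N) (Fin N × Fin N) A :=
  Matrix.of fun p q => X p.1 q.1 * (if p.2 = q.2 then 1 else 0)

/-- `X₂ = I_N ⊗ X` for an `A`-valued matrix. -/
def lift2nd {N : ℕ} {A : Type} [Ring A] (X : Matrix (Fin N) (Fin N) A) :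
    Matrix (Fin N × Fin N) (Fin N × Fin N) A :=
  Matrix.of fun p q => (if p.1 = q.1 then 1 else 0) * X p.2 q.2

/-- The partial trace over the second tensor factor, `Mat_{N²}(A) → Mat_N(A)`. -/
def ptr2 {N : ℕ} {A : Type} [Ring A]
    (Y : Matrix (Fin N × Fin N) (Fin N × Fin N) A) : Matrix (Fin N) (Fin N) A :=
  Matrix.of fun a d => ∑ b : Fin N, Y (a, b) (d, b)

/-- The `R`-trace `Tr_R(X) = Tr(C·X)` of an `A`-valued matrix. -/
def trR {N : ℕ} {A : Type} [Ring A] [Algebra ℂ A] (C : Matrix (Fin N) (Fin N) ℂ)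
    (X : Matrix (Fin N) (Fin N) A) : A :=
  ∑ i : Fin N, ∑ j : Fin N, algebraMap ℂ A (C i j) * X j i


theorem aux_comm4 {N : ℕ} {M : Type} [AddCommMonoid M] (f : Fin N → Fin N → Fin N → Fin N → M) :
    ∑ b, ∑ c, ∑ i, ∑ j, f b c i j = ∑ i, ∑ j, ∑ b, ∑ c, f b c i j := by
  calc ∑ b, ∑ c, ∑ i, ∑ j, f b c i j
      = ∑ b, ∑ i, ∑ c, ∑ j, f b c i j := Finset.sum_congr rfl fun b _ => Finset.sum_comm
    _ = ∑ b, ∑ i, ∑ j, ∑ c, f b c i j :=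
        Finset.sum_congr rfl fun b _ => Finset.sum_congr rfl fun i _ => Finset.sum_comm
    _ = ∑ i, ∑ b, ∑ j, ∑ c, f b c i j := Finset.sum_comm
    _ = _ := Finset.sum_congr rfl fun i _ => Finset.sum_comm

theorem aux_up12_mul {N : ℕ} (X Y : Matrix (Fin N × Fin N) (Fin N × Fin N) ℂ) :
    up12 (X * Y) = up12 X * up12 Y := by
  ext ⟨a, b, c⟩ ⟨x, y, z⟩
  simp [up12, Matrix.mul_apply, Fintype.sum_prod_type, Finset.sum_mul]

theorem aux_up23_mul {N : ℕ} (X Y : Matrix (Fin N × Fin N) (Fin N × Fin N) ℂ) :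
    up23 (X * Y) = up23 X * up23 Y := by
  ext ⟨a, b, c⟩ ⟨x, y, z⟩
  by_cases h : a = x <;> simp [up23, Matrix.mul_apply, Fintype.sum_prod_type, h]

theorem aux_up12_one {N : ℕ} : up12 (1 : Matrix (Fin N × Fin N) (Fin N × Fin N) ℂ) = 1 := by
  ext ⟨a, b, c⟩ ⟨x, y, z⟩
  simp only [up12, Matrix.one_apply, Matrix.of_apply, Prod.mk.injEq]
  split_ifs <;> simp_all

theorem aux_up23_one {N : ℕ} : up23 (1 : Matrix (Fin N × Fin N) (Fin N × Fin N) ℂ) = 1 := by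
  ext ⟨a, b, c⟩ ⟨x, y, z⟩
  simp only [up23, Matrix.one_apply, Matrix.of_apply, Prod.mk.injEq]
  split_ifs <;> simp_all

/-- `Tr₂ (C₂ R) = 1`. -/
theorem aux_trC {N : ℕ} (R Ψ : Matrix (Fin N × Fin N) (Fin N × Fin N) ℂ)
    (h : ptrMid (up12 R * up23 Ψ) = flip13 N) (n m : Fin N) :
    ∑ b, ∑ c, Cmat Ψ b c * R (n, c) (m, b) = if n = m then 1 else 0 := by
  have h1 : ∀ k, ∑ c, ∑ b, R (n, c) (m, b) * Ψ (b, k) (c, k)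
      = if n = k ∧ k = m then 1 else 0 := by
    intro k
    have := congrFun (congrFun h (n, k)) (m, k)
    simpa [ptrMid, up12, up23, flip13, Matrix.mul_apply, Fintype.sum_prod_type] using this
  have h2 : ∑ k, ∑ c, ∑ b, R (n, c) (m, b) * Ψ (b, k) (c, k) = if n = m then 1 else 0 := by
    simp_rw [h1, ite_and]
    simp
  rw [← h2, Finset.sum_comm]
  conv_rhs => rw [Finset.sum_comm]
  refine Finset.sum_congr rfl fun c _ => ?_
  conv_rhs => rw [Finset.sum_comm]
  refine Finset.sum_congr rfl fun b _ => ?_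
  simp only [Cmat, Matrix.of_apply, Finset.sum_mul]
  exact Finset.sum_congr rfl fun k _ => mul_comm _ _

theorem aux_span {N : ℕ} (R Ψ : Matrix (Fin N × Fin N) (Fin N × Fin N) ℂ)
    (h : ptrMid (up12 Ψ * up23 R) = flip13 N) (p q i j : Fin N) :
    ∑ y, ∑ x, Ψ (p, y) (q, x) * R (x, i) (y, j) = if p = j ∧ i = q then 1 else 0 := by
  have := congrFun (congrFun h (p, i)) (q, j)
  simpa [ptrMid, up12, up23, flip13, Matrix.mul_apply, Fintype.sum_prod_type] using this

noncomputable def auxF {N : ℕ} (C : Matrix (Fin N) (Fin N) ℂ)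
    (S T : Matrix (Fin N × Fin N) (Fin N × Fin N) ℂ) (a d i j : Fin N) : ℂ :=
  ∑ b, ∑ c, ∑ k, C b c * S (a, c) (i, k) * T (j, k) (d, b)

theorem aux_G {N : ℕ} (R Ψ S T : Matrix (Fin N × Fin N) (Fin N × Fin N) ℂ)
    (h : ptrMid (up12 R * up23 Ψ) = flip13 N) (hTS : T * S = 1)
    (hY : up23 S * up12 R * up23 T = up12 T * up23 R * up12 S) (x y a d : Fin N) :
    ∑ i, ∑ j, R (x, i) (y, j) * auxF (Cmat Ψ) S T a d i j
      = if x = y ∧ a = d then 1 else 0 := by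
  have e1 : ∑ b, ∑ c, Cmat Ψ b c * (up23 S * up12 R * up23 T) (x, a, c) (y, d, b)
      = ∑ i, ∑ j, R (x, i) (y, j) * auxF (Cmat Ψ) S T a d i j := by
    have e : ∀ b c, (up23 S * up12 R * up23 T) (x, a, c) (y, d, b)
        = ∑ i, ∑ j, ∑ k, S (a, c) (i, k) * R (x, i) (y, j) * T (j, k) (d, b) := by
      intro b c
      simp [up12, up23, Matrix.mul_apply, Fintype.sum_prod_type, Finset.sum_mul]
      refine (Finset.sum_congr rfl fun j _ => Finset.sum_comm).trans ?_
      exact Finset.sum_comm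
    simp_rw [e, auxF, Finset.mul_sum]
    rw [aux_comm4]
    refine Finset.sum_congr rfl fun i _ => Finset.sum_congr rfl fun j _ => ?_
    refine Finset.sum_congr rfl fun b _ => Finset.sum_congr rfl fun c _ => ?_
    refine Finset.sum_congr rfl fun k _ => ?_
    ring
  have e2 : ∑ b, ∑ c, Cmat Ψ b c * (up12 T * up23 R * up12 S) (x, a, c) (y, d, b)
      = (T * S) (x, a) (y, d) := by
    have e : ∀ b c, (up12 T * up23 R * up12 S) (x, a, c) (y, d, b)
        = ∑ m, ∑ n, ∑ n', T (x, a) (m, n) * R (n, c) (n', b) * S (m, n') (y, d) := by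
      intro b c
      simp [up12, up23, Matrix.mul_apply, Fintype.sum_prod_type, Finset.sum_mul]
      exact Finset.sum_congr rfl fun m _ => Finset.sum_comm
    simp_rw [e, Finset.mul_sum]
    rw [aux_comm4]
    have e' : ∀ m n, ∑ b, ∑ c, ∑ n', Cmat Ψ b c *
        (T (x, a) (m, n) * R (n, c) (n', b) * S (m, n') (y, d))
        = T (x, a) (m, n) * S (m, n) (y, d) := by
      intro m n
      have : ∀ n', ∑ b, ∑ c, Cmat Ψ b c *
        (T (x, a) (m, n) * R (n, c) (n', b) * S (m, n') (y, d))
        = T (x, a) (m, n) * (if n = n' then 1 else 0) * S (m, n') (y, d) := by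
        intro n'
        rw [← aux_trC R Ψ h]
        simp_rw [Finset.mul_sum, Finset.sum_mul]
        refine Finset.sum_congr rfl fun b _ => Finset.sum_congr rfl fun c _ => ?_
        ring
      calc _ = ∑ b, ∑ n', ∑ c, Cmat Ψ b c *
              (T (x, a) (m, n) * R (n, c) (n', b) * S (m, n') (y, d)) :=
            Finset.sum_congr rfl fun b _ => Finset.sum_comm
        _ = _ := by
            rw [Finset.sum_comm]
            simp_rw [this]
            simp
    simp_rw [e']
    simp [Matrix.mul_apply, Fintype.sum_prod_type]
  rw [← e1, hY, e2, hTS, Matrix.one_apply]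
  simp

theorem aux_F {N : ℕ} (R Ψ S T : Matrix (Fin N × Fin N) (Fin N × Fin N) ℂ)
    (h : ptrMid (up12 R * up23 Ψ) = flip13 N) (h' : ptrMid (up12 Ψ * up23 R) = flip13 N)
    (hTS : T * S = 1)
    (hY : up23 S * up12 R * up23 T = up12 T * up23 R * up12 S) (a d q p : Fin N) :
    auxF (Cmat Ψ) S T a d q p = if a = d then Cmat Ψ p q else 0 := by
  have e1 : ∑ y, ∑ x, Ψ (p, y) (q, x) *
      (∑ i, ∑ j, R (x, i) (y, j) * auxF (Cmat Ψ) S T a d i j) = auxF (Cmat Ψ) S T a d q p := by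
    have : ∀ i j, ∑ y, ∑ x, Ψ (p, y) (q, x) * (R (x, i) (y, j) * auxF (Cmat Ψ) S T a d i j)
       = (if p = j ∧ i = q then 1 else 0) * auxF (Cmat Ψ) S T a d i j := by
      intro i j
      rw [← aux_span R Ψ h', Finset.sum_mul]
      simp_rw [Finset.sum_mul, mul_assoc]
    have e3 : ∑ i, ∑ j, ∑ y, ∑ x, Ψ (p, y) (q, x) *
        (R (x, i) (y, j) * auxF (Cmat Ψ) S T a d i j) = auxF (Cmat Ψ) S T a d q p := by
      simp_rw [this, ite_and]
      simp
    rw [← e3]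
    simp_rw [Finset.mul_sum]
    rw [aux_comm4]
  rw [← e1]
  simp_rw [aux_G R Ψ S T h hTS hY]
  by_cases had : a = d <;> simp [had, Cmat]

theorem aux_main {N : ℕ} (C : Matrix (Fin N) (Fin N) ℂ)
    (S T : Matrix (Fin N × Fin N) (Fin N × Fin N) ℂ)
    (hF : ∀ a d q p, auxF C S T a d q p = if a = d then C p q else 0)
    (A : Type) [Ring A] [Algebra ℂ A] (X : Matrix (Fin N) (Fin N) A) :
    ptr2 (lift2nd (C.map (algebraMap ℂ A)) * S.map (algebraMap ℂ A)
        * lift1 X * T.map (algebraMap ℂ A))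
      = trR C X • (1 : Matrix (Fin N) (Fin N) A) := by
  ext a d
  have e1 : ptr2 (lift2nd (C.map (algebraMap ℂ A)) * S.map (algebraMap ℂ A)
        * lift1 X * T.map (algebraMap ℂ A)) a d
      = ∑ b, ∑ j, ∑ k, ∑ i, ∑ c, algebraMap ℂ A (C b c * S (a, c) (i, k) * T (j, k) (d, b)) * X i j := by
    simp [ptr2, lift1, lift2nd, Matrix.mul_apply, Fintype.sum_prod_type, Finset.sum_mul]
    refine Finset.sum_congr rfl fun b _ => Finset.sum_congr rfl fun j _ => ?_
    refine Finset.sum_congr rfl fun k _ => Finset.sum_congr rfl fun i _ => ?_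
    refine Finset.sum_congr rfl fun c _ => ?_
    rw [mul_assoc (_ * _) (X i j), ← Algebra.commutes (T (j, k) (d, b)) (X i j), ← mul_assoc]
  have e2 : ∑ i, ∑ j, algebraMap ℂ A (auxF C S T a d i j) * X i j
     = ∑ b, ∑ j, ∑ k, ∑ i, ∑ c, algebraMap ℂ A (C b c * S (a, c) (i, k) * T (j, k) (d, b)) * X i j := by
    simp only [auxF, map_sum, Finset.sum_mul]
    rw [aux_comm4]
    refine Finset.sum_congr rfl fun b _ => ?_
    rw [aux_comm4]
    exact Finset.sum_congr rfl fun j _ => Finset.sum_congr rfl fun k _ => Finset.sum_comm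
  rw [e1, ← e2]
  simp_rw [hF]
  by_cases had : a = d
  · subst had
    simp [trR]
    exact Finset.sum_comm
  · simp [had]

/-- For a skew-invertible R-matrix with invertible `B = Tr₍₁₎(Ψ)`, the partial
R-traces of the R-conjugates of `X₁` are scalar:
`Tr₍₂₎(C₂·R₁·X₁·R₁⁻¹) = Tr_R(X)·I` and `Tr₍₂₎(C₂·R₁⁻¹·X₁·R₁) = Tr_R(X)·I`. -/
theorem rtrace_of_conjugates_scalar (N : ℕ) (hN : 1 ≤ N)
    (R Rinv Ψ : Matrix (Fin N × Fin N) (Fin N × Fin N) ℂ)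
    (hYB : up12 R * up23 R * up12 R = up23 R * up12 R * up23 R)
    (hRinv : R * Rinv = 1 ∧ Rinv * R = 1)
    (hskew : ptrMid (up12 R * up23 Ψ) = flip13 N ∧ ptrMid (up12 Ψ * up23 R) = flip13 N)
    (hB : IsUnit (Bmat Ψ))
    (A : Type) [Ring A] [Algebra ℂ A] (X : Matrix (Fin N) (Fin N) A) :
    ptr2 (lift2nd ((Cmat Ψ).map (algebraMap ℂ A)) * R.map (algebraMap ℂ A)
        * lift1 X * Rinv.map (algebraMap ℂ A))
      = trR (Cmat Ψ) X • (1 : Matrix (Fin N) (Fin N) A)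
    ∧ ptr2 (lift2nd ((Cmat Ψ).map (algebraMap ℂ A)) * Rinv.map (algebraMap ℂ A)
        * lift1 X * R.map (algebraMap ℂ A))
      = trR (Cmat Ψ) X • (1 : Matrix (Fin N) (Fin N) A) := by
  obtain ⟨h1, h2⟩ := hRinv
  have a1 : up12 R * up12 Rinv = 1 := by rw [← aux_up12_mul, h1, aux_up12_one]
  have a2 : up12 Rinv * up12 R = 1 := by rw [← aux_up12_mul, h2, aux_up12_one]
  have b1 : up23 R * up23 Rinv = 1 := by rw [← aux_up23_mul, h1, aux_up23_one]
  have b2 : up23 Rinv * up23 R = 1 := by rw [← aux_up23_mul, h2, aux_up23_one]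
  have y1 : up23 R * up12 R * up23 Rinv = up12 Rinv * up23 R * up12 R := by
    calc up23 R * up12 R * up23 Rinv
        = up12 Rinv * up12 R * (up23 R * up12 R * up23 Rinv) := by rw [a2, one_mul]
      _ = up12 Rinv * (up12 R * up23 R * up12 R) * up23 Rinv := by simp only [mul_assoc]
      _ = up12 Rinv * up23 R * up12 R * (up23 R * up23 Rinv) := by
          rw [hYB]; simp only [mul_assoc]
      _ = _ := by rw [b1, mul_one]
  have y2 : up23 Rinv * up12 R * up23 R = up12 R * up23 R * up12 Rinv := by
    calc up23 Rinv * up12 R * up23 R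
        = up23 Rinv * up12 R * up23 R * (up12 R * up12 Rinv) := by rw [a1, mul_one]
      _ = up23 Rinv * (up12 R * up23 R * up12 R) * up12 Rinv := by simp only [mul_assoc]
      _ = (up23 Rinv * up23 R) * up12 R * up23 R * up12 Rinv := by
          rw [hYB]; simp only [mul_assoc]
      _ = _ := by rw [b2, one_mul]
  exact ⟨aux_main _ R Rinv (aux_F R Ψ R Rinv hskew.1 hskew.2 h2 y1) A X,
    aux_main _ Rinv R (aux_F R Ψ Rinv R hskew.1 hskew.2 h1 y2) A X⟩
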